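/- The word w contains no factor v having a kernel period q with |v|/q ≥ 35/34 + 9/(2·1966). -/

import Mathlib

/-- The four-letter alphabet `A₄ = {1,2,3,4}`; the value `k : Fin 4` represents letter `k+1`. -/
abbrev A4 := Fin 4

/-- The morphism `f` on letters: `f(1)=121, f(2)=123, f(3)=141, f(4)=142`
(letters `1,2,3,4` encoded as `0,1,2,3`). -/
def fm : A4 → List A4
  | 0 => [0, 1, 0]
  | 1 => [0, 1, 2]
  | 2 => [0, 3, 0]
  | 3 => [0, 3, 1]

/-- The morphism `f` extended to words by concatenation. -/
def fw (u : List A4) : List A4 := u.flatMap fm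

/-- The fixed point `w` of `f` starting with the letter `1`: since `|f^k(1)| = 3^k` and each
`f^k(1)` is a prefix of `f^(k+1)(1)`, the `n`-th letter of `w` is the `n`-th letter of
`f^(n+1)(1)`. -/
def w (n : ℕ) : A4 := ((fw^[n + 1]) [0]).getD n 0

/-- The finite word `t` occurs at position `i` in the infinite word `x`. -/
def OccursAt {α : Type*} (t : List α) (x : ℕ → α) (i : ℕ) : Prop :=
  t = (List.range t.length).map fun k => x (i + k)

/-- The finite word `v` is a factor of the infinite word `x`. -/
def FactorOf {α : Type*} (v : List α) (x : ℕ → α) : Prop :=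
  ∃ i, OccursAt v x i

/-- The finite word `v` has period `q ≥ 1`: `v(j) = v(j+q)` whenever `0 ≤ j < |v| - q`. -/
def HasPeriod {α : Type*} (v : List α) (q : ℕ) : Prop :=
  1 ≤ q ∧ ∀ j, j + q < v.length → v[j]? = v[j + q]?

/-- A word lies in `ker ψ` if each letter of `A₄` occurs in it a number of times
divisible by `4`. -/
def InKerPsi (u : List A4) : Prop := ∀ a : A4, 4 ∣ u.count a

/-- `q` is a kernel period of `v`: `1 ≤ q ≤ |v|`, `v` has period `q`, and the prefix of `v`
of length `q` lies in `ker ψ`. -/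
def KernelPeriod (v : List A4) (q : ℕ) : Prop :=
  q ≤ v.length ∧ HasPeriod v q ∧ InKerPsi (v.take q)

/-!
A factor of length `q + e` with kernel period `q` is a run of `e + 1` consecutive windows of length
`q`, all with Parikh vector zero modulo `4`. If `e ≥ 3`, comparing letters at distance `q` shows
`3 ∣ q`. Since the incidence matrix of `f` is invertible modulo `4` and all images of letters begin
with `1`, such a run desubstitutes to one with period `q / 3` and some excess `e'` with
`e + 3 / 2 ≤ 3 * (e' + 3 / 2)`. So the ratio `(e + 3 / 2) / q` does not decrease, and it suffices to
bound it when `e < 3`. There only short periods matter. A few of these do occur with too large a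
ratio, but not their triples. This is a computation on a single word for each period, as every
factor of length at most `3 ^ k` lies in the `k`-th image of a word containing all two-letter
factors.
-/

section Factor

variable {α : Type*} {x : ℕ → α}

/-- The factor `x(i) x(i+1) ⋯ x(i+n-1)` of the infinite word `x`. -/
def factor (x : ℕ → α) (i n : ℕ) : List α := (List.range n).map fun j => x (i + j)

@[simp]
theorem length_factor (i n : ℕ) : (factor x i n).length = n := by simp [factor]

theorem factor_add (i m n : ℕ) : factor x i (m + n) = factor x i m ++ factor x (i + m) n := by
  simp [factor, List.range_add, Function.comp_def, add_assoc]

theorem getElem?_factor {i j n : ℕ} (hj : j < n) : (factor x i n)[j]? = some (x (i + j)) := by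
  simp [factor, hj]

theorem factor_one (i : ℕ) : factor x i 1 = [x i] := rfl

theorem factor_infix_factor {i j m n : ℕ} (hij : i ≤ j) (h : j + n ≤ i + m) :
    factor x j n <:+: factor x i m := by
  obtain ⟨c, rfl⟩ := Nat.exists_eq_add_of_le hij
  obtain ⟨d, rfl⟩ : ∃ d, m = c + n + d := ⟨m - (c + n), by omega⟩
  exact ⟨factor x i c, factor x (i + (c + n)) d, by rw [← factor_add, ← factor_add]⟩

end Factor

section UniformMorphism

variable {α : Type*} {φ : α → List α} {x : ℕ → α} {k : ℕ}

/-- The infinite word `x` is fixed by the morphism `φ`, whose images of letters of `x` have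
length `k`: the `n`-th block of length `k` of `x` is the image of its `n`-th letter. -/
def IsUniformFixedPoint (φ : α → List α) (k : ℕ) (x : ℕ → α) : Prop :=
  ∀ n, φ (x n) = factor x (k * n) k

namespace IsUniformFixedPoint

theorem flatMap_factor (hx : IsUniformFixedPoint φ k x) (i n : ℕ) :
    (factor x i n).flatMap φ = factor x (k * i) (k * n) := by
  induction n with
  | zero => rfl
  | succ n ih =>
    rw [factor_add, List.flatMap_append, ih, factor_one, List.flatMap_singleton, hx, mul_add k i,
      mul_add_one, factor_add]

theorem iterate_flatMap_factor (hx : IsUniformFixedPoint φ k x) (m i n : ℕ) :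
    (List.flatMap φ)^[m] (factor x i n) = factor x (k ^ m * i) (k ^ m * n) := by
  induction m with
  | zero => simp
  | succ m ih =>
    rw [Function.iterate_succ_apply', ih, hx.flatMap_factor, pow_succ', mul_assoc, mul_assoc]

theorem exists_factor_infix_iterate (hx : IsUniformFixedPoint φ k x) (hk : 0 < k) {m n : ℕ}
    (hn : n ≤ k ^ m) (i : ℕ) :
    ∃ b, factor x i n <:+: (List.flatMap φ)^[m] (factor x b 2) := by
  refine ⟨i / k ^ m, ?_⟩
  rw [hx.iterate_flatMap_factor]
  apply factor_infix_factor (Nat.mul_div_le i (k ^ m))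
  linarith [Nat.div_add_mod i (k ^ m), Nat.mod_lt i (Nat.pow_pos hk : 0 < k ^ m)]

end IsUniformFixedPoint

theorem infix_iterate_flatMap {u v : List α} (h : u <:+: v) (m : ℕ) :
    (List.flatMap φ)^[m] u <:+: (List.flatMap φ)^[m] v := by
  induction m with
  | zero => exact h
  | succ m ih =>
    rw [Function.iterate_succ_apply', Function.iterate_succ_apply']
    exact ih.flatMap φ

end UniformMorphism

section Parikh

variable {α : Type*} [DecidableEq α] {m : ℕ} {x : ℕ → α}

/-- The Parikh vector of the finite word `u`, with the numbers of occurrences taken modulo `m`.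
The morphism `ψ` of the kernel condition is `parikh 4`. -/
def parikh (m : ℕ) (u : List α) : α → ZMod m := fun a => u.count a

theorem parikh_nil : parikh m ([] : List α) = 0 := by
  ext
  simp [parikh]

theorem parikh_append (u v : List α) : parikh m (u ++ v) = parikh m u + parikh m v := by
  ext a
  simp [parikh]

theorem parikh_singleton (a : α) : parikh m [a] = Pi.single a 1 := by
  ext b
  by_cases h : b = a
  · simp [parikh, h]
  · simp [parikh, h, Ne.symm h]

theorem sum_parikh [Fintype α] (u : List α) : ∑ a, parikh m u a = u.length := by
  induction u with
  | nil => simp [parikh]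
  | cons a u ih =>
    rw [← List.singleton_append, parikh_append, parikh_singleton]
    simp [Finset.sum_add_distrib, ih, add_comm]

theorem singleton_add_parikh_factor_succ (i q : ℕ) :
    parikh m [x i] + parikh m (factor x (i + 1) q) =
      parikh m (factor x i q) + parikh m [x (i + q)] := by
  rw [← parikh_append, ← parikh_append, ← factor_one, ← factor_one, ← factor_add, ← factor_add,
    add_comm]

/-- The matrix of the morphism `φ`: its action on Parikh vectors modulo `m`. -/
def incidenceMatrix (m : ℕ) (φ : α → List α) : Matrix α α (ZMod m) :=
  Matrix.of fun a b => parikh m (φ b) a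

theorem parikh_flatMap [Fintype α] (φ : α → List α) (u : List α) :
    parikh m (u.flatMap φ) = (incidenceMatrix m φ).mulVec (parikh m u) := by
  induction u with
  | nil => rw [List.flatMap_nil, parikh_nil, Matrix.mulVec_zero]
  | cons a u ih =>
    rw [List.flatMap_cons, parikh_append, ih, ← List.singleton_append, parikh_append,
      Matrix.mulVec_add, parikh_singleton, Matrix.mulVec_single_one]
    rfl

end Parikh

section KernelRepetition

variable {α : Type*} [DecidableEq α] {m q i e : ℕ} {x : ℕ → α}

/-- The factor of `x` of length `q + e` at position `i` is a kernel repetition of period `q` and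
excess `e`: each of its `e + 1` factors of length `q` has Parikh vector zero modulo `m`. -/
def IsKernelRepetition (m : ℕ) (x : ℕ → α) (q i e : ℕ) : Prop :=
  ∀ j ≤ e, parikh m (factor x (i + j) q) = 0

namespace IsKernelRepetition

theorem mono (h : IsKernelRepetition m x q i e) {e' : ℕ} (he : e' ≤ e) :
    IsKernelRepetition m x q i e' :=
  fun j hj => h j (hj.trans he)

theorem dvd_period [Finite α] (h : IsKernelRepetition m x q i e) : m ∣ q := by
  have := Fintype.ofFinite α
  rw [← ZMod.natCast_eq_zero_iff, ← length_factor (x := x) (i + 0) q, ← sum_parikh,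
    h 0 (Nat.zero_le e)]
  simp

theorem apply_add_period [Fact (1 < m)] (h : IsKernelRepetition m x q i e) {p : ℕ} (hip : i ≤ p)
    (hpe : p < i + e) : x (p + q) = x p := by
  obtain ⟨j, rfl⟩ := Nat.exists_eq_add_of_le hip
  have slide := singleton_add_parikh_factor_succ (m := m) (x := x) (i + j) q
  rw [h j (by omega), add_assoc i j 1, h (j + 1) (by omega), add_zero, zero_add, parikh_singleton,
    parikh_singleton] at slide
  by_contra hne
  simpa [Pi.single_eq_of_ne hne] using congrFun slide (x (i + j + q))

end IsKernelRepetition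

theorem isKernelRepetition_of_apply_add_period (hker : parikh m (factor x i q) = 0)
    (hper : ∀ j < e, x (i + j + q) = x (i + j)) : IsKernelRepetition m x q i e := by
  intro j hj
  induction j with
  | zero => exact hker
  | succ j ih =>
    have slide := singleton_add_parikh_factor_succ (m := m) (x := x) (i + j) q
    rwa [hper j (by omega), ih (by omega), zero_add, add_eq_left] at slide

end KernelRepetition

section Desubstitution

variable {α : Type*} [Fintype α] [DecidableEq α] {φ : α → List α} {x : ℕ → α} {m k : ℕ}

theorem IsUniformFixedPoint.parikh_factor_eq_zero (hx : IsUniformFixedPoint φ k x)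
    (hφ : ∀ v, (incidenceMatrix m φ).mulVec v = 0 → v = 0) {i q : ℕ}
    (h : parikh m (factor x (k * i) (k * q)) = 0) : parikh m (factor x i q) = 0 := by
  rw [← hx.flatMap_factor, parikh_flatMap] at h
  exact hφ _ h

theorem IsUniformFixedPoint.parikh_factor_eq_zero_of_succ (hx : IsUniformFixedPoint φ k x)
    (hφ : ∀ v, (incidenceMatrix m φ).mulVec v = 0 → v = 0) {i q : ℕ}
    (hfirst : x (k * i) = x (k * (i + q)))
    (h : parikh m (factor x (k * i + 1) (k * q)) = 0) : parikh m (factor x i q) = 0 := by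
  apply hx.parikh_factor_eq_zero hφ
  have slide := singleton_add_parikh_factor_succ (m := m) (x := x) (k * i) (k * q)
  rwa [h, add_zero, hfirst, ← mul_add, right_eq_add] at slide

end Desubstitution

section FixedPoint

theorem length_fm (a : A4) : (fm a).length = 3 := by
  revert a
  decide

theorem length_fw (u : List A4) : (fw u).length = 3 * u.length := by
  simp [fw, List.length_flatMap, length_fm, mul_comm]

theorem length_iterate_fw (k : ℕ) (u : List A4) : (fw^[k] u).length = 3 ^ k * u.length := by
  induction k with
  | zero => simp
  | succ k ih => rw [Function.iterate_succ_apply', length_fw, ih, pow_succ', mul_assoc]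

theorem iterate_fw_prefix_succ (k : ℕ) : fw^[k] [0] <+: fw^[k + 1] [0] := by
  induction k with
  | zero => exact ⟨[1, 0], rfl⟩
  | succ k ih =>
    rw [Function.iterate_succ_apply', Function.iterate_succ_apply' fw (k + 1)]
    exact ih.flatMap fm

theorem iterate_fw_prefix_iterate {k l : ℕ} (h : k ≤ l) : fw^[k] [0] <+: fw^[l] [0] := by
  induction l, h using Nat.le_induction with
  | base => exact List.prefix_rfl
  | succ l _ ih => exact ih.trans (iterate_fw_prefix_succ l)

theorem iterate_fw_eq_factor (k : ℕ) : fw^[k] [0] = factor w 0 (3 ^ k) := by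
  have length_iterate (l : ℕ) : (fw^[l] [0]).length = 3 ^ l := by simp [length_iterate_fw]
  refine List.ext_getElem (by simp [length_iterate]) fun n hn _ => ?_
  have hn' : n < (fw^[n + 1] [0]).length := by
    rw [length_iterate]
    exact (Nat.lt_pow_self (by norm_num)).trans (Nat.pow_lt_pow_succ (by norm_num))
  have hw : w n = (fw^[n + 1] [0])[n] := List.getD_eq_getElem _ _ hn'
  simp only [factor, List.getElem_map, List.getElem_range, zero_add, hw]
  rcases le_total k (n + 1) with h | h
  · exact (iterate_fw_prefix_iterate h).getElem hn
  · exact ((iterate_fw_prefix_iterate h).getElem hn').symm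

theorem isUniformFixedPoint_w : IsUniformFixedPoint fm 3 w := by
  intro n
  obtain ⟨d, hd⟩ : ∃ d, 3 ^ n = n + 1 + d := Nat.exists_eq_add_of_le (Nat.lt_pow_self (by norm_num))
  have h : fw (factor w 0 (n + 1 + d)) = factor w 0 (3 * n + 3 + 3 * d) := by
    rw [← hd, ← iterate_fw_eq_factor, ← Function.iterate_succ_apply' fw, iterate_fw_eq_factor,
      pow_succ', hd, mul_add, mul_add, mul_one]
  simp only [factor_add, fw, List.flatMap_append, factor_one, List.flatMap_singleton,
    zero_add] at h
  have hleft := List.append_inj_left h (by simp [List.length_flatMap, length_fm, mul_comm])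
  exact List.append_inj_right hleft (by simp [List.length_flatMap, length_fm, mul_comm])

theorem fm_w (n : ℕ) : fm (w n) = [w (3 * n), w (3 * n + 1), w (3 * n + 2)] :=
  isUniformFixedPoint_w n

theorem w_three_mul (n : ℕ) : w (3 * n) = 0 := by
  have fm_first : ∀ a b c d, fm a = [b, c, d] → b = 0 := by decide
  exact fm_first _ _ _ _ (fm_w n)

theorem w_three_mul_add_one_ne_zero (n : ℕ) : w (3 * n + 1) ≠ 0 := by
  have fm_second : ∀ a b c d, fm a = [b, c, d] → c ≠ 0 := by decide
  exact fm_second _ _ _ _ (fm_w n)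

/-- A word over `A₄` among whose factors are all factors of length two of `w`. It is not itself a
factor of `w`. -/
def pairWord : List A4 := [3, 0, 0, 3, 1, 2, 0, 1, 0]

theorem factor_w_two_infix_pairWord (n : ℕ) : factor w n 2 <:+: pairWord := by
  have fm_pairs : ∀ a b c d, fm a = [b, c, d] →
      [b, c] <:+: pairWord ∧ [c, d] <:+: pairWord ∧ [d, 0] <:+: pairWord := by decide
  obtain ⟨pairFirst, pairSecond, pairLast⟩ := fm_pairs _ _ _ _ (fm_w (n / 3))
  rw [← w_three_mul (n / 3 + 1)] at pairLast
  have hn := Nat.div_add_mod n 3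
  have hmod : n % 3 < 3 := Nat.mod_lt n (by norm_num)
  interval_cases n % 3 <;> rw [← hn] <;> assumption

theorem factor_w_infix_iterate_pairWord {k n : ℕ} (hn : n ≤ 3 ^ k) (i : ℕ) :
    factor w i n <:+: fw^[k] pairWord := by
  obtain ⟨b, hb⟩ := isUniformFixedPoint_w.exists_factor_infix_iterate (by norm_num) hn i
  exact hb.trans (infix_iterate_flatMap (factor_w_two_infix_pairWord b) k)

end FixedPoint

section PrefixCodes

/-- The Parikh vector `p` modulo `4`, read as the number with base-four digits
`p 0, p 1, p 2, p 3`. -/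
def parikhCode (p : A4 → ZMod 4) : ℕ := ∑ a, (p a).val * 4 ^ a.val

/-- Increments modulo `4` the base-four digit of `c` that counts the letter `a`. -/
def addLetter (c : ℕ) (a : A4) : ℕ :=
  c / 4 ^ (a.val + 1) * 4 ^ (a.val + 1) + (c + 4 ^ a.val) % 4 ^ (a.val + 1)

/-- The codes of the Parikh vectors of all prefixes of `u`. Two equal codes delimit a factor in
`ker ψ`. -/
def prefixCodes (u : List A4) : List ℕ := u.scanl addLetter 0

theorem parikhCode_add_single (p : A4 → ZMod 4) (a : A4) :
    parikhCode (p + Pi.single a 1) = addLetter (parikhCode p) a := by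
  revert p a
  decide +kernel

theorem foldl_addLetter_parikhCode (p : A4 → ZMod 4) (u : List A4) :
    u.foldl addLetter (parikhCode p) = parikhCode (p + parikh 4 u) := by
  induction u generalizing p with
  | nil => rw [List.foldl_nil, parikh_nil, add_zero]
  | cons a u ih =>
    rw [List.foldl_cons, ← parikhCode_add_single, ih, ← List.singleton_append, parikh_append,
      parikh_singleton, add_assoc]

theorem getElem?_prefixCodes (u : List A4) {r : ℕ} (hr : r ≤ u.length) :
    (prefixCodes u)[r]? = some (parikhCode (parikh 4 (u.take r))) := by
  have parikhCode_zero : parikhCode 0 = 0 := rfl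
  rw [prefixCodes, List.getElem?_scanl, if_pos hr, ← parikhCode_zero, foldl_addLetter_parikhCode,
    zero_add]

end PrefixCodes

section FiniteCheck

/-- The list whose `r`-th entry records whether the factor of `u` of length `q` at position `r` is
in `ker ψ`, as far as both ends of the factor lie in `u`. -/
def kernelTrace (q : ℕ) (u : List A4) : List Bool :=
  List.zipWith Nat.beq (prefixCodes u) ((prefixCodes u).drop q)

/-- The list `l` contains `n` consecutive entries `true`. The test is Boolean because unfolding the
`Decidable` instances of the corresponding proposition exceeds the recursion depth of the kernel on
lists of several thousand entries. -/
def hasRun (n : ℕ) (l : List Bool) : Bool := l.tails.any (List.replicate n true).isPrefixOf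

theorem hasRun_of_forall_getElem?_eq {l : List Bool} {n s : ℕ}
    (h : ∀ j < n, l[s + j]? = some true) : hasRun n l = true := by
  rw [hasRun, List.any_eq_true]
  refine ⟨l.drop s, (List.mem_tails _ _).2 (List.drop_suffix s l), ?_⟩
  rw [List.isPrefixOf_iff_prefix, List.prefix_iff_getElem?]
  intro j hj
  rw [List.length_replicate] at hj
  rw [List.getElem?_drop, h j hj, List.getElem_replicate]

theorem IsKernelRepetition.hasRun_kernelTrace {x : ℕ → A4} {u : List A4} {q i e : ℕ}
    (hu : factor x i (q + e) <:+: u) (h : IsKernelRepetition 4 x q i e) :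
    hasRun (e + 1) (kernelTrace q u) = true := by
  obtain ⟨s, t, rfl⟩ := hu
  have code (j : ℕ) (hj : j ≤ q + e) :
      (prefixCodes (s ++ factor x i (q + e) ++ t))[s.length + j]? =
        some (parikhCode (parikh 4 s + parikh 4 (factor x i j))) := by
    obtain ⟨d, hd⟩ := Nat.exists_eq_add_of_le hj
    have hlength : s.length + j ≤ (s ++ factor x i (q + e) ++ t).length := by
      simp only [List.length_append, length_factor]
      omega
    rw [getElem?_prefixCodes _ hlength, hd, factor_add, ← parikh_append]
    simp [List.take_append, List.take_of_length_le]
  refine hasRun_of_forall_getElem?_eq (s := s.length) fun j hj => ?_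
  have window : parikh 4 (factor x i (j + q)) = parikh 4 (factor x i j) := by
    rw [factor_add, parikh_append, h j (by omega), add_zero]
  rw [kernelTrace, List.getElem?_zipWith, List.getElem?_drop, code j (by omega),
    add_comm q (_ + j), add_assoc, code (j + q) (by omega), window]
  simp

/-- Periods and excesses `(q, e)` of which `w` contains no kernel repetition. The periods above
`108` are three times those in `exceptional`. -/
def excluded : List (ℕ × ℕ) :=
  [(4, 0), (8, 0), (12, 0), (16, 0), (20, 0), (24, 0), (28, 0), (32, 0), (36, 0), (40, 1), (44, 1),
    (48, 1), (52, 1), (56, 1), (60, 1), (64, 1), (68, 2), (72, 1), (76, 1), (80, 2), (84, 2),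
    (88, 2), (92, 2), (96, 2), (100, 2), (104, 3), (108, 2), (120, 3), (132, 3), (204, 6), (312, 9),
    (612, 18)]

theorem hasRun_kernelTrace_eq_false : ∀ t ∈ excluded,
    hasRun (t.2 + 1) (kernelTrace t.1 (fw^[Nat.clog 3 (t.1 + t.2)] pairWord)) = false := by
  decide +kernel

theorem not_isKernelRepetition_of_mem_excluded {t : ℕ × ℕ} (ht : t ∈ excluded) {i e : ℕ}
    (he : t.2 ≤ e) : ¬ IsKernelRepetition 4 w t.1 i e := by
  intro h
  have infix_pairWord :=
    factor_w_infix_iterate_pairWord (Nat.le_pow_clog (by norm_num : 1 < 3) (t.1 + t.2)) i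
  simpa [(h.mono he).hasRun_kernelTrace infix_pairWord] using hasRun_kernelTrace_eq_false t ht

end FiniteCheck

section Descent

theorem eq_zero_of_incidenceMatrix_fm_mulVec_eq_zero (v : A4 → ZMod 4)
    (hv : (incidenceMatrix 4 fm).mulVec v = 0) : v = 0 := by
  revert v
  decide +kernel

theorem three_dvd_of_forall_apply_add_eq {i q : ℕ}
    (h : ∀ p, i ≤ p → p < i + 3 → w (p + q) = w p) : 3 ∣ q := by
  obtain ⟨a, hia, hai⟩ : ∃ a, i ≤ 3 * a ∧ 3 * a < i + 3 := ⟨(i + 2) / 3, by omega, by omega⟩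
  obtain ⟨b, hib, hbi⟩ : ∃ b, i ≤ 3 * b + 1 ∧ 3 * b + 1 < i + 3 :=
    ⟨(i + 1) / 3, by omega, by omega⟩
  obtain ⟨c, rfl | rfl | rfl⟩ : ∃ c, q = 3 * c ∨ q = 3 * c + 1 ∨ q = 3 * c + 2 :=
    ⟨q / 3, by omega⟩
  · exact dvd_mul_right 3 c
  · refine absurd ?_ (w_three_mul_add_one_ne_zero (a + c))
    rw [mul_add, add_assoc, h _ hia hai, w_three_mul]
  · refine absurd ?_ (w_three_mul_add_one_ne_zero b)
    rw [← h _ hib hbi, show 3 * b + 1 + (3 * c + 2) = 3 * (b + c + 1) by ring, w_three_mul]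

theorem IsKernelRepetition.desubstitute {q i e : ℕ} (h : IsKernelRepetition 4 w (3 * q) i e)
    (he : 1 ≤ e) : IsKernelRepetition 4 w q ((i + 1) / 3) ((i + e) / 3 - (i + 1) / 3) := by
  intro j hj
  generalize ha : (i + 1) / 3 + j = a
  rcases le_or_gt i (3 * a) with hi | hi
  · apply isUniformFixedPoint_w.parikh_factor_eq_zero eq_zero_of_incidenceMatrix_fm_mulVec_eq_zero
    obtain ⟨d, hd⟩ := Nat.exists_eq_add_of_le hi
    rw [hd]
    exact h d (by omega)
  · apply isUniformFixedPoint_w.parikh_factor_eq_zero_of_succ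
      eq_zero_of_incidenceMatrix_fm_mulVec_eq_zero
    · rw [w_three_mul, w_three_mul]
    · obtain rfl : i = 3 * a + 1 := by omega
      exact h 0 (by omega)

/-- The periods and excesses `(q, e)` at which `IsShort` tolerates a kernel repetition although
`e + 3 / 2 ≥ q * 2119 / 66844`. -/
def exceptional : List (ℕ × ℕ) := [(40, 0), (44, 0), (68, 1), (104, 2), (204, 5)]

/-- The bound on the excess `e` of a kernel repetition of period `q` proved by induction on `q`:
`e + 3 / 2 < q * 2119 / 66844`, up to exceptions, where
`1 + 2119 / 66844 = 35 / 34 + 9 / (2 * 1966)`. The summand `3 / 2` makes the bound scale by three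
under `e' ↦ 3 * e' + 3`. -/
def IsShort (q e : ℕ) : Prop := 33422 * (2 * e + 3) < 2119 * q ∨ (q, e) ∈ exceptional

instance (q e : ℕ) : Decidable (IsShort q e) := inferInstanceAs (Decidable (_ ∨ _))

theorem IsShort.lt {q e : ℕ} (h : IsShort q e) : 66844 * e < 2119 * q := by
  rcases h with h | h
  · omega
  · have exceptional_lt : ∀ t ∈ exceptional, 66844 * t.2 < 2119 * t.1 := by decide
    exact exceptional_lt _ h

/-- The table `excluded` forbids kernel repetitions of period `q` and excess `e`. -/
def IsExcluded (q e : ℕ) : Prop := ∃ t ∈ excluded, t.1 = q ∧ t.2 ≤ e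

instance (q e : ℕ) : Decidable (IsExcluded q e) := inferInstanceAs (Decidable (∃ _ ∈ _, _))

theorem isShort_or_isExcluded_of_lt_three {q e : ℕ} (hq : 0 < q) (hdvd : 4 ∣ q) (he : e < 3) :
    IsShort q e ∨ IsExcluded q e := by
  rcases le_or_gt 111 q with hlarge | hsmall
  · left; left; omega
  · have small_periods : ∀ q < 111, 0 < q → 4 ∣ q → ∀ e < 3, IsShort q e ∨ IsExcluded q e := by
      decide +kernel
    exact small_periods q hsmall hq hdvd e he

theorem isShort_or_isExcluded_three_mul {q e e' : ℕ} (h : IsShort q e') (he : e ≤ 3 * e' + 3) :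
    IsShort (3 * q) e ∨ IsExcluded (3 * q) e := by
  rcases h with h | h
  · left; left; omega
  · have exceptional_tripled : ∀ t ∈ exceptional, ∀ e < 3 * t.2 + 4,
        IsShort (3 * t.1) e ∨ IsExcluded (3 * t.1) e := by decide +kernel
    exact exceptional_tripled _ h e (by omega)

theorem IsKernelRepetition.isShort {q i e : ℕ} (hq : 0 < q) (h : IsKernelRepetition 4 w q i e) :
    IsShort q e := by
  induction q using Nat.strong_induction_on generalizing i e with
  | _ q ih =>
    suffices IsShort q e ∨ IsExcluded q e by
      apply this.resolve_right
      rintro ⟨t, ht, rfl, he⟩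
      exact not_isKernelRepetition_of_mem_excluded ht he h
    rcases lt_or_ge e 3 with he | he
    · exact isShort_or_isExcluded_of_lt_three hq h.dvd_period he
    · have : Fact (1 < 4) := ⟨by norm_num⟩
      obtain ⟨q, rfl⟩ : 3 ∣ q := three_dvd_of_forall_apply_add_eq fun p hip hpi =>
        h.apply_add_period hip (by omega)
      have short := ih q (by omega) (by omega) (h.desubstitute (by omega))
      exact isShort_or_isExcluded_three_mul short (by omega)

end Descent

theorem inKerPsi_iff_parikh_eq_zero (u : List A4) : InKerPsi u ↔ parikh 4 u = 0 := by
  simp [InKerPsi, funext_iff, parikh, ZMod.natCast_eq_zero_iff]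

theorem isKernelRepetition_of_kernelPeriod {x : ℕ → A4} {v : List A4} {q i : ℕ}
    (hv : OccursAt v x i) (hq : KernelPeriod v q) :
    IsKernelRepetition 4 x q i (v.length - q) := by
  obtain ⟨hle, ⟨_, hper⟩, hker⟩ := hq
  obtain ⟨e, he⟩ := Nat.exists_eq_add_of_le hle
  obtain rfl : v = factor x i (q + e) := he ▸ hv
  rw [length_factor] at hper ⊢
  rw [Nat.add_sub_cancel_left]
  apply isKernelRepetition_of_apply_add_period
  · rwa [inKerPsi_iff_parikh_eq_zero, factor_add, List.take_left' (length_factor _ _)] at hker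
  · intro j hj
    have heq := hper j (by omega)
    rw [getElem?_factor (by omega), getElem?_factor (by omega)] at heq
    rw [add_assoc, Option.some.inj heq]

/-- `w` contains no factor `v` having a kernel period `q` with `|v|/q ≥ 35/34 + 9/(2·1966)`. -/
theorem stmt1 : ¬ ∃ (v : List A4) (q : ℕ), FactorOf v w ∧ KernelPeriod v q ∧
    (v.length : ℚ) / q ≥ 35 / 34 + 9 / (2 * 1966) := by
  rintro ⟨v, q, ⟨i, hv⟩, hq, hratio⟩
  have hqpos : 0 < q := hq.2.1.1
  have hlt := ((isKernelRepetition_of_kernelPeriod hv hq).isShort hqpos).lt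
  obtain ⟨e, he⟩ := Nat.exists_eq_add_of_le hq.1
  rw [he, Nat.add_sub_cancel_left] at hlt
  rw [he, ge_iff_le, le_div_iff₀ (by positivity)] at hratio
  have hlt' : 66844 * (e : ℚ) < 2119 * q := by exact_mod_cast hlt
  push_cast at hratio
  linarith
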